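/- arXiv:1001.0746 — 3 statements merged into one kernel-verified Lean document; each statement's English description precedes it below -/
import Mathlib

section
/- For every real number c with 1 < c ≤ √2, there exists a normal form alternation-trading proof for c with exactly 4 lines, whose annotation is [1,0,0] (one application of Speedup Rule 0 followed by two applications of the Slowdown Rule). (This is the syntactic content of the Lipton–Viglas n^{√2} lower bound.) -/
/-- A quantifier block `(Q n^a)^b`: a quantifier label `Q` (`true` = ∃, `false` = ∀),
the guess exponent `a`, and the input exponent `b` written to its right
(so the block for `Q_i` carries `b_{i+1}`). -/
structure Block where
  Q : Bool
  a : ℝ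
  b : ℝ

/-- A line `(Q_1 n^{a_1})^{b_2} (Q_2 n^{a_2})^{b_3} ⋯ (Q_k n^{a_k})^{b_{k+1}} DTS[n^{a_{k+1}}]`.
The quantifier blocks are listed *innermost first*, i.e.
`blocks = [(Q_k, a_k, b_{k+1}), …, (Q_1, a_1, b_2)]`, and `dts = a_{k+1}`. -/
structure Line where
  blocks : List Block
  dts : ℝ

/-- Well-formedness of a line: `a_{k+1} ≥ 1`, all `a_i ≥ 0`, all `b_i ≥ 1`, and
adjacent quantifiers alternate (`Q_i ≠ Q_{i+1}`). -/
def Line.WF (L : Line) : Prop :=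
  1 ≤ L.dts ∧ (∀ B ∈ L.blocks, 0 ≤ B.a ∧ 1 ≤ B.b) ∧
    L.blocks.Chain' (fun B B' => B.Q ≠ B'.Q)

/-- Reading off `b_k` from the list of blocks outside block `k`:
by convention `b_1 = 1` when no blocks remain. -/
def prevB : List Block → ℝ
  | [] => 1
  | B :: _ => B.b

/-- Speedup Rule 0: from `DTS[n^{a₁}]` (k = 0), for any `0 < x < a₁` and `Q₀`,
derive `(Q₀ n^x)^{max(x,1)} (Q₁ n^0)^1 DTS[n^{max(a₁ - x, 1)}]` with `Q₁ ≠ Q₀`. -/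
inductive Speedup0 : Line → Line → Prop
  | intro (a₁ x : ℝ) (Q : Bool) (h0 : 0 < x) (h1 : x < a₁) :
      Speedup0 ⟨[], a₁⟩ ⟨[⟨!Q, 0, 1⟩, ⟨Q, x, max x 1⟩], max (a₁ - x) 1⟩

/-- Speedup Rule 1: from `⋯ (Q_k n^{a_k})^{b_{k+1}} DTS[n^{a_{k+1}}]` (k > 0), for any
`0 < x < a_{k+1}`, derive
`⋯ (Q_k n^{max(a_k,x)})^{max(x,b_{k+1})} (Q_{k+1} n^0)^{b_{k+1}} DTS[n^{max(a_{k+1} - x, 1)}]`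
with `Q_{k+1} ≠ Q_k`. -/
inductive Speedup1 : Line → Line → Prop
  | intro (Qk : Bool) (ak bk1 a x : ℝ) (rest : List Block) (h0 : 0 < x) (h1 : x < a) :
      Speedup1 ⟨⟨Qk, ak, bk1⟩ :: rest, a⟩
        ⟨⟨!Qk, 0, bk1⟩ :: ⟨Qk, max ak x, max x bk1⟩ :: rest, max (a - x) 1⟩

/-- Speedup Rule 2: from `⋯ (Q_k n^{a_k})^{b_{k+1}} DTS[n^{a_{k+1}}]` (k > 0), for any
`0 < x < a_{k+1}`, derive
`⋯ (Q_k n^{a_k})^{b_{k+1}} (Q_{k+1} n^x)^{max(x,b_{k+1})} (Q_{k+2} n^0)^{b_{k+1}}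
DTS[n^{max(a_{k+1} - x, 1)}]` with `Q_{k+1} ≠ Q_k`, `Q_{k+2} ≠ Q_{k+1}`. -/
inductive Speedup2 : Line → Line → Prop
  | intro (Qk : Bool) (ak bk1 a x : ℝ) (rest : List Block) (h0 : 0 < x) (h1 : x < a) :
      Speedup2 ⟨⟨Qk, ak, bk1⟩ :: rest, a⟩
        ⟨⟨Qk, 0, bk1⟩ :: ⟨!Qk, x, max x bk1⟩ :: ⟨Qk, ak, bk1⟩ :: rest, max (a - x) 1⟩

/-- A speedup step: an application of Speedup Rule 0, 1 or 2. -/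
def SpeedupStep (L L' : Line) : Prop := Speedup0 L L' ∨ Speedup1 L L' ∨ Speedup2 L L'

/-- Slowdown Rule: from `⋯ (Q_{k-1} n^{a_{k-1}})^{b_k} (Q_k n^{a_k})^{b_{k+1}} DTS[n^{a_{k+1}}]`
(k > 0) derive `⋯ (Q_{k-1} n^{a_{k-1}})^{b_k} DTS[n^{c · max(a_{k+1}, a_k, b_k, b_{k+1})}]`,
with the convention `b_1 = 1`. -/
inductive Slowdown (c : ℝ) : Line → Line → Prop
  | intro (Qk : Bool) (ak bk1 a : ℝ) (rest : List Block) :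
      Slowdown c ⟨⟨Qk, ak, bk1⟩ :: rest, a⟩
        ⟨rest, c * max (max a ak) (max (prevB rest) bk1)⟩

/-- A step of an alternation-trading proof for `c`. -/
def Step (c : ℝ) (L L' : Line) : Prop := SpeedupStep L L' ∨ Slowdown c L L'

/-- An alternation-trading proof for `c`: a nonempty list of well-formed lines in which
each line after the first follows from the previous one by a Speedup or Slowdown Rule. -/
def IsATProof (c : ℝ) (P : List Line) : Prop :=
  P ≠ [] ∧ (∀ L ∈ P, L.WF) ∧ P.Chain' (Step c)

/-- Normal form: the first line is `DTS[n^a]`, the last line is `DTS[n^{a'}]` with `a ≥ a'`,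
and no intermediate line is a `DTS` class (i.e. has `k = 0`). -/
def IsNormalForm (P : List Line) : Prop :=
  (∃ a a' : ℝ, a' ≤ a ∧ P.head? = some ⟨[], a⟩ ∧ P.getLast? = some ⟨[], a'⟩) ∧
    ∀ i L, 0 < i → i + 1 < P.length → P[i]? = some L → L.blocks ≠ []

/-- `A` is the annotation of the proof `P`: `A` has one bit per step of `P`
(bit `A[i]` governs the step from line `i` to line `i+1`, 0-indexed), a `true` bit
marks a Speedup Rule application and a `false` bit a Slowdown Rule application. -/
def HasAnnotation (c : ℝ) (P : List Line) (A : List Bool) : Prop :=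
  A.length + 1 = P.length ∧
    ∀ i L L', P[i]? = some L → P[i + 1]? = some L' →
      (A[i]? = some true → SpeedupStep L L') ∧ (A[i]? = some false → Slowdown c L L')

/-- for every real `1 < c ≤ √2` there is a normal form alternation-trading
proof for `c` with exactly 4 lines and annotation `[1,0,0]`. -/
theorem statement0 (c : ℝ) (hc1 : 1 < c) (hc2 : c ≤ Real.sqrt 2) :
    ∃ P : List Line, IsATProof c P ∧ IsNormalForm P ∧ P.length = 4 ∧
      HasAnnotation c P [true, false, false] := by
  have hcc : c * c ≤ 2 :=
    (mul_self_le_mul_self (by linarith) hc2).trans_eq (Real.mul_self_sqrt (by norm_num))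
  have speedup : SpeedupStep ⟨[], 2⟩ ⟨[⟨false, 0, 1⟩, ⟨true, 1, 1⟩], 1⟩ := by
    have h := Speedup0.intro 2 1 true (by norm_num) (by norm_num)
    norm_num at h
    exact Or.inl h
  have slowdown_inner :
      Slowdown c ⟨[⟨false, 0, 1⟩, ⟨true, 1, 1⟩], 1⟩ ⟨[⟨true, 1, 1⟩], c⟩ := by
    simpa [prevB] using Slowdown.intro (c := c) false 0 1 1 [⟨true, 1, 1⟩]
  have slowdown_outer : Slowdown c ⟨[⟨true, 1, 1⟩], c⟩ ⟨[], c * c⟩ := by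
    simpa [prevB, hc1.le] using Slowdown.intro (c := c) true 1 1 c []
  refine ⟨[⟨[], 2⟩, ⟨[⟨false, 0, 1⟩, ⟨true, 1, 1⟩], 1⟩, ⟨[⟨true, 1, 1⟩], c⟩, ⟨[], c * c⟩],
    ⟨by simp, ?_, ?_⟩, ⟨⟨2, c * c, hcc, rfl, rfl⟩, ?_⟩, rfl, rfl, ?_⟩
  · have : 1 ≤ c * c := by nlinarith
    simp [Line.WF, List.Chain', hc1.le, this]
  · simp [List.Chain', Step, speedup, slowdown_inner, slowdown_outer]
  · rintro (_ | _ | _ | i) L h0 hi hL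
    · omega
    · simp at hL; simp [← hL]
    · simp at hL; simp [← hL]
    · simp only [List.length_cons, List.length_nil] at hi; omega
  · rintro (_ | _ | _ | i) L L' hL hL'
    · simp at hL hL'; simpa [← hL, ← hL'] using speedup
    · simp at hL hL'; simpa [← hL, ← hL'] using slowdown_inner
    · simp at hL hL'; simpa [← hL, ← hL'] using slowdown_outer
    · simp at hL'
end

section
/- For every real number c with √2 ≤ c ≤ √((1+√17)/2), there exists a normal form alternation-trading proof for c with exactly 8 lines, whose annotation is [1,1,0,0,1,0,0]. (This is the syntactic content of the n^{1.6004} lower bound; note √((1+√17)/2) ≈ 1.60048.) -/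
/-- The hypotheses on `c` in polynomial form: `2 ≤ c² ≤ 4` and `c⁴ - c² - 4 ≤ 0`. -/
theorem exponent_bounds {c : ℝ} (hc1 : Real.sqrt 2 ≤ c)
    (hc2 : c ≤ Real.sqrt ((1 + Real.sqrt 17) / 2)) :
    1 ≤ c ∧ c ≤ 2 ∧ 2 ≤ c ^ 2 ∧ (c ^ 2) ^ 2 ≤ c ^ 2 + 4 := by
  have h17 : Real.sqrt 17 ^ 2 = 17 := Real.sq_sqrt (by norm_num)
  have hsqrt_nonneg := Real.sqrt_nonneg 17
  have hc0 : 0 ≤ c := (Real.sqrt_nonneg 2).trans hc1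
  have hlow : 2 ≤ c ^ 2 := (Real.sqrt_le_left hc0).1 hc1
  have hupp : c ^ 2 ≤ (1 + Real.sqrt 17) / 2 := (Real.le_sqrt hc0 (by positivity)).1 hc2
  refine ⟨?_, ?_, hlow, ?_⟩ <;> nlinarith

/-- for every real `√2 ≤ c ≤ √((1+√17)/2)` there is a normal form
alternation-trading proof for `c` with exactly 8 lines and annotation `[1,1,0,0,1,0,0]`. -/
theorem statement1 (c : ℝ) (hc1 : Real.sqrt 2 ≤ c)
    (hc2 : c ≤ Real.sqrt ((1 + Real.sqrt 17) / 2)) :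
    ∃ P : List Line, IsATProof c P ∧ IsNormalForm P ∧ P.length = 8 ∧
      HasAnnotation c P [true, true, false, false, true, false, false] := by
  obtain ⟨hc, hc_le, hlow, hquart⟩ := exponent_bounds hc1 hc2
  -- The speedup exponents are `x = c²/2`, `1` and `x`; the first line is `DTS[n^{x+2}]` and the
  -- last one is `DTS[n^{c²x}]`.
  obtain ⟨x, hx⟩ : ∃ x, c ^ 2 = 2 * x := ⟨c ^ 2 / 2, by ring⟩
  have hx1 : 1 ≤ x := by linarith
  have hxc : x ≤ c := by nlinarith
  have hlast : c * (c * x) ≤ x + 2 := by nlinarith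
  have s₁ : SpeedupStep ⟨[], x + 2⟩ ⟨[⟨false, 0, 1⟩, ⟨true, x, x⟩], 2⟩ := by
    have h := Speedup0.intro (x + 2) x true (by linarith) (by linarith)
    norm_num [hx1] at h
    exact .inl h
  have s₂ : SpeedupStep ⟨[⟨false, 0, 1⟩, ⟨true, x, x⟩], 2⟩
      ⟨[⟨true, 0, 1⟩, ⟨false, 1, 1⟩, ⟨true, x, x⟩], 1⟩ := by
    have h := Speedup1.intro false 0 1 2 1 [⟨true, x, x⟩] (by norm_num) (by norm_num)
    norm_num at h
    exact .inr (.inl h)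
  have s₃ : Slowdown c ⟨[⟨true, 0, 1⟩, ⟨false, 1, 1⟩, ⟨true, x, x⟩], 1⟩
      ⟨[⟨false, 1, 1⟩, ⟨true, x, x⟩], c⟩ := by
    simpa [prevB] using Slowdown.intro (c := c) true 0 1 1 [⟨false, 1, 1⟩, ⟨true, x, x⟩]
  have s₄ : Slowdown c ⟨[⟨false, 1, 1⟩, ⟨true, x, x⟩], c⟩ ⟨[⟨true, x, x⟩], 2 * x⟩ := by
    have h := Slowdown.intro (c := c) false 1 1 c [⟨true, x, x⟩]
    simpa [prevB, hc, hx1, hxc, ← pow_two, hx] using h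
  have s₅ : SpeedupStep ⟨[⟨true, x, x⟩], 2 * x⟩ ⟨[⟨false, 0, x⟩, ⟨true, x, x⟩], x⟩ := by
    have h := Speedup1.intro true x x (2 * x) x [] (by linarith) (by linarith)
    rw [show 2 * x - x = x by ring] at h
    exact .inr (.inl (by simpa [hx1] using h))
  have s₆ : Slowdown c ⟨[⟨false, 0, x⟩, ⟨true, x, x⟩], x⟩ ⟨[⟨true, x, x⟩], c * x⟩ := by
    simpa [prevB, zero_le_one.trans hx1] using Slowdown.intro (c := c) false 0 x x [⟨true, x, x⟩]
  have hxcx : x ≤ c * x := by nlinarith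
  have s₇ : Slowdown c ⟨[⟨true, x, x⟩], c * x⟩ ⟨[], c * (c * x)⟩ := by
    simpa [prevB, hxcx, hx1] using Slowdown.intro (c := c) true x x (c * x) []
  have hx0 : 0 ≤ x := zero_le_one.trans hx1
  have hcx1 : 1 ≤ c * x := hx1.trans hxcx
  have hccx1 : 1 ≤ c * (c * x) := by nlinarith
  refine ⟨[⟨[], x + 2⟩, ⟨[⟨false, 0, 1⟩, ⟨true, x, x⟩], 2⟩,
    ⟨[⟨true, 0, 1⟩, ⟨false, 1, 1⟩, ⟨true, x, x⟩], 1⟩, ⟨[⟨false, 1, 1⟩, ⟨true, x, x⟩], c⟩,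
    ⟨[⟨true, x, x⟩], 2 * x⟩, ⟨[⟨false, 0, x⟩, ⟨true, x, x⟩], x⟩, ⟨[⟨true, x, x⟩], c * x⟩,
    ⟨[], c * (c * x)⟩], ⟨by simp, ?_, ?_⟩,
    ⟨⟨x + 2, c * (c * x), hlast, rfl, rfl⟩, ?_⟩, rfl, rfl, ?_⟩
  · have h1 : 1 ≤ x + 2 := by linarith
    have h2 : 1 ≤ 2 * x := by linarith
    simp [Line.WF, List.Chain', *]
  · simp only [List.Chain', List.isChain_cons_cons, List.isChain_singleton, and_true]
    exact ⟨.inl s₁, .inl s₂, .inr s₃, .inr s₄, .inl s₅, .inr s₆, .inr s₇⟩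
  · intro i L hi hlen hL
    simp only [List.length_cons, List.length_nil] at hlen
    have hi' : i < 7 := by omega
    interval_cases i <;> cases hL <;> simp
  · intro i L L' hL hL'
    have hi : i < 7 := Nat.lt_of_succ_lt_succ (List.getElem?_eq_some_iff.1 hL').1
    interval_cases i <;> cases hL <;> cases hL' <;> simpa
end

section
/- For every real number c with 1 < c < 2·cos(π/7), there exists a normal form alternation-trading proof for c with at least two lines. (This is the syntactic content of the n^{2cos(π/7)} time lower bound for SAT on n^{o(1)}-space algorithms.) -/
open Relation

namespace AlternationTrading

variable {c : ℝ} {L L' : Line}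

theorem wf_of_step (hc : 1 < c) (h : Step c L L') (hL : L.WF) : L'.WF := by
  obtain ⟨hd, hb, hQ⟩ := hL
  rcases h with (h | h | h) | h
  · obtain ⟨a, x, Q, h0, -⟩ := h
    refine ⟨le_max_right _ _, ?_, ?_⟩
    · simp [h0.le]
    · exact List.isChain_pair.2 (by simp)
  · obtain ⟨Q, a, b, d, x, rest, h0, -⟩ := h
    have hB := hb _ List.mem_cons_self
    refine ⟨le_max_right _ _, ?_, ?_⟩
    · intro B hmem
      rcases List.mem_cons.1 hmem with rfl | hmem
      · exact ⟨le_rfl, hB.2⟩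
      rcases List.mem_cons.1 hmem with rfl | hmem
      · exact ⟨le_max_of_le_left hB.1, le_max_of_le_right hB.2⟩
      · exact hb B (List.mem_cons_of_mem _ hmem)
    · refine List.isChain_cons_cons.2 ⟨by simp, ?_⟩
      exact List.isChain_cons.2 (List.isChain_cons.1 hQ)
  · obtain ⟨Q, a, b, d, x, rest, h0, -⟩ := h
    have hB := hb _ List.mem_cons_self
    refine ⟨le_max_right _ _, ?_, ?_⟩
    · intro B hmem
      rcases List.mem_cons.1 hmem with rfl | hmem
      · exact ⟨le_rfl, hB.2⟩
      rcases List.mem_cons.1 hmem with rfl | hmem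
      · exact ⟨h0.le, le_max_of_le_right hB.2⟩
      · exact hb B hmem
    · exact List.isChain_cons_cons.2 ⟨by simp, List.isChain_cons_cons.2 ⟨by simp, hQ⟩⟩
  · obtain ⟨Q, a, b, d, rest⟩ := h
    refine ⟨?_, fun B hB => hb B (List.mem_cons_of_mem _ hB), ?_⟩
    · have h1 : 1 ≤ max (max d a) (max (prevB rest) b) :=
        le_max_of_le_left (le_max_of_le_left hd)
      exact one_le_mul_of_one_le_of_one_le hc.le h1
    · exact hQ.tail

/-- A proof step whose result still has a quantifier block. -/
def InnerStep (c : ℝ) (L M : Line) : Prop := Step c L M ∧ M.blocks ≠ []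

/-- Proof steps through lines with a quantifier block, enclosed by a step out of a `DTS` line
and a step into a `DTS` line of no larger exponent, form a normal form proof. -/
theorem exists_normalForm {a a' : ℝ} (hc : 1 < c) (ha : 1 ≤ a) (haa : a' ≤ a)
    (hfst : InnerStep c ⟨[], a⟩ L) (hmid : ReflTransGen (InnerStep c) L L')
    (hlst : Step c L' ⟨[], a'⟩) :
    ∃ P : List Line, IsATProof c P ∧ IsNormalForm P ∧ 2 ≤ P.length := by
  obtain ⟨l, hl, hlast⟩ := List.exists_isChain_cons_of_relationReflTransGen hmid
  have hne : ∀ M ∈ L :: l, M.blocks ≠ [] := by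
    refine hl.induction (fun M => M.blocks ≠ []) _ (fun _ _ h _ => h.2) (fun _ => hfst.2)
  have hchain : List.IsChain (Step c) (⟨[], a⟩ :: ((L :: l) ++ [⟨[], a'⟩])) := by
    refine List.isChain_cons_cons.2 ⟨hfst.1, ?_⟩
    refine List.isChain_append.2 ⟨hl.imp fun _ _ h => h.1, List.isChain_singleton _, ?_⟩
    intro x hx y hy
    rw [List.getLast?_eq_getLast_of_ne_nil (List.cons_ne_nil _ _), hlast] at hx
    obtain rfl := Option.some.inj hx
    obtain rfl : _ = y := Option.some.inj hy
    exact hlst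
  refine ⟨⟨[], a⟩ :: ((L :: l) ++ [⟨[], a'⟩]), ⟨List.cons_ne_nil _ _, ?_, ?_⟩,
    ⟨⟨a, a', haa, rfl, ?_⟩, ?_⟩, by simp⟩
  · exact hchain.induction Line.WF _ (fun _ _ h => wf_of_step hc h)
      (fun _ => ⟨ha, by simp, List.isChain_nil⟩)
  · exact hchain
  · rw [← List.cons_append, List.getLast?_append]
    rfl
  · intro i M hi hlen hM
    obtain ⟨j, rfl⟩ := Nat.exists_eq_add_of_lt hi
    rw [zero_add, List.getElem?_cons_succ, List.getElem?_append_left] at hM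
    · exact hne M (List.mem_of_getElem? hM)
    · simp at hlen ⊢
      omega

/-- Speedups by `x` alternating with slowdowns bring `(Q n^x)^x DTS[n^a]` down to
`(Q n^x)^x DTS[n^{cx}]`, as long as `a` is below the repelling fixed point `cx/(c-1)`. -/
theorem reach_mul_of_pow_mul_le (hc : 1 < c) (Q : Bool) (rest : List Block) {x : ℝ} (hx : 1 ≤ x)
    (m : ℕ) : ∀ a : ℝ, c * x ≤ a → c / (c - 1) * x ≤ c ^ m * (c / (c - 1) * x - a) →
      ReflTransGen (InnerStep c) ⟨⟨Q, x, x⟩ :: rest, a⟩ ⟨⟨Q, x, x⟩ :: rest, c * x⟩ := by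
  have hround : ∀ a : ℝ, c * x ≤ a →
      ReflTransGen (InnerStep c) ⟨⟨Q, x, x⟩ :: rest, a⟩
        ⟨⟨Q, x, x⟩ :: rest, c * max (a - x) x⟩ := by
    intro a ha
    have hup := Speedup1.intro Q x x a x rest (by linarith) (by nlinarith)
    have hdown := Slowdown.intro (c := c) (!Q) 0 x (max (a - x) 1) (⟨Q, x, x⟩ :: rest)
    have hmax : max (max (max (a - x) 1) 0) (max x x) = max (a - x) x := by
      rw [max_self, max_assoc, max_assoc, max_eq_right (b := x) (by linarith),
        max_eq_right hx]
    rw [max_self] at hup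
    rw [prevB, hmax] at hdown
    exact .tail (.single ⟨.inl (.inr (.inl hup)), by simp⟩) ⟨.inr hdown, by simp⟩
  induction m with
  | zero =>
    intro a ha h
    nlinarith
  | succ m ih =>
    intro a ha h
    have hr := hround a ha
    rcases le_total (a - x) x with hle | hle
    · rwa [max_eq_right hle] at hr
    · rw [max_eq_left hle] at hr
      refine hr.trans (ih _ (by nlinarith) ?_)
      have hfix : c / (c - 1) * x - c * (a - x) = c * (c / (c - 1) * x - a) := by
        have : c - 1 ≠ 0 := by linarith
        field_simp
        ring
      rw [hfix, ← mul_assoc, ← pow_succ]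
      exact h

theorem reach_mul {K x : ℝ} (hc : 1 < c) (Q : Bool) (rest : List Block) (hx : 1 ≤ x)
    (hcK : c ≤ K) (hK : K < c / (c - 1)) :
    ReflTransGen (InnerStep c) ⟨⟨Q, x, x⟩ :: rest, K * x⟩ ⟨⟨Q, x, x⟩ :: rest, c * x⟩ := by
  have hpos : 0 < c / (c - 1) - K := by linarith
  obtain ⟨m, hm⟩ := pow_unbounded_of_one_lt (c / (c - 1) / (c / (c - 1) - K)) hc
  refine reach_mul_of_pow_mul_le hc Q rest hx m _ (by nlinarith) ?_
  rw [div_lt_iff₀ hpos] at hm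
  nlinarith

/-- The exponent ratio achieved by `n` nested speedups, each followed by repeated speedups and
slowdowns starting from `(Q n^x)^x DTS[n^{Kx}]`. -/
noncomputable def ratio (c K : ℝ) : ℕ → ℝ
  | 0 => c
  | n + 1 => c ^ 2 * ratio c K n / (ratio c K n + K)

theorem ratio_pos {K : ℝ} (hc : 0 < c) (hK : 0 < K) (n : ℕ) : 0 < ratio c K n := by
  induction n with
  | zero => exact hc
  | succ n ih => rw [ratio]; positivity

theorem exists_ratio_le_one {K : ℝ} (hc : 0 < c) (hK : 0 < K) (hcK : c ^ 2 - 1 < K) :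
    ∃ n, ratio c K (n + 1) ≤ 1 := by
  by_contra! h
  have hq1 : c ^ 2 / (1 + K) < 1 := by
    rw [div_lt_one (by linarith)]
    linarith
  have hq0 : 0 ≤ c ^ 2 / (1 + K) := by positivity
  have hdecay : ∀ n, ratio c K (n + 1) ≤ (c ^ 2 / (1 + K)) ^ n * ratio c K 1 := by
    intro n
    induction n with
    | zero => simp
    | succ n ih =>
      have hr := h n
      calc ratio c K (n + 1 + 1)
          = c ^ 2 * ratio c K (n + 1) / (ratio c K (n + 1) + K) := rfl
        _ ≤ c ^ 2 * ratio c K (n + 1) / (1 + K) := by gcongr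
        _ = c ^ 2 / (1 + K) * ratio c K (n + 1) := by ring
        _ ≤ c ^ 2 / (1 + K) * ((c ^ 2 / (1 + K)) ^ n * ratio c K 1) := by gcongr
        _ = _ := by ring
  have hpos := ratio_pos hc hK 1
  obtain ⟨n, hn⟩ := exists_pow_lt_of_lt_one (inv_pos.2 hpos) hq1
  rw [← one_div, lt_div_iff₀ hpos] at hn
  linarith [h n, hdecay n]

/-- For large `a`, the block in `(P n^y)^b (Q n^0)^1 DTS[n^a]` can be removed at the price of
the exponent `max (c * b) (ratio c K n * a)`. -/
theorem reach_ratio {K : ℝ} (hc : 1 < c) (hcK : c ≤ K) (hK : K < c / (c - 1)) (n : ℕ) :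
    ∃ A : ℝ, 1 ≤ A ∧ ∀ a, A ≤ a → ∀ (Q : Bool) (B : Block) (rest : List Block), 1 ≤ B.b →
      ReflTransGen (InnerStep c) ⟨⟨Q, 0, 1⟩ :: B :: rest, a⟩
        ⟨B :: rest, max (c * B.b) (ratio c K n * a)⟩ := by
  induction n with
  | zero =>
    refine ⟨1, le_rfl, fun a ha Q B rest hB => .single ⟨.inr ?_, by simp⟩⟩
    have hdown := Slowdown.intro (c := c) Q 0 1 a (B :: rest)
    rwa [prevB, max_eq_left (by linarith : (0 : ℝ) ≤ a), max_eq_left hB, max_comm,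
      mul_max_of_nonneg _ _ (by linarith)] at hdown
  | succ n ih =>
    obtain ⟨A, hA1, hA⟩ := ih
    have hr := ratio_pos (c := c) (K := K) (by linarith) (by linarith) n
    have hK0 : 0 < K := by linarith
    set r := ratio c K n with hrdef
    refine ⟨max 1 (max ((r + K) / r) (A * (r + K) / K)), le_max_left _ _, ?_⟩
    intro a ha Q B rest hB
    obtain ⟨ha1, ha2, ha3⟩ : 1 ≤ a ∧ (r + K) / r ≤ a ∧ A * (r + K) / K ≤ a := by
      simpa using ha
    set x := r * a / (r + K) with hxdef
    have hx : 1 ≤ x := by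
      rw [div_le_iff₀ hr] at ha2
      rw [hxdef, le_div_iff₀ (by linarith)]
      linarith
    have hax : a - x = K * a / (r + K) := by
      rw [hxdef]
      field_simp
      ring
    have hAx : A ≤ a - x := by
      rw [div_le_iff₀ hK0] at ha3
      rw [hax, le_div_iff₀ (by linarith)]
      linarith
    have hrx : r * (a - x) = K * x := by
      rw [hax, hxdef]
      ring
    have hup := Speedup1.intro Q 0 1 a x (B :: rest) (by linarith) (by linarith)
    rw [max_eq_right (by linarith : (0 : ℝ) ≤ x), max_eq_left hx,
      max_eq_left (by linarith : 1 ≤ a - x)] at hup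
    have hin := hA (a - x) hAx (!Q) ⟨Q, x, x⟩ (B :: rest) hx
    rw [hrx, max_eq_right (by nlinarith : c * x ≤ K * x)] at hin
    have hdown := Slowdown.intro (c := c) Q x x (c * x) (B :: rest)
    have hout : c * max (max (c * x) x) (max B.b x) = max (c * B.b) (ratio c K (n + 1) * a) := by
      have hcx : x ≤ c * x := by nlinarith
      have hval : ratio c K (n + 1) * a = c * (c * x) := by
        rw [ratio, ← hrdef, hxdef]
        ring
      rw [hval, ← mul_max_of_nonneg _ _ (by linarith : (0 : ℝ) ≤ c), max_eq_left hcx,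
        max_comm B.b x, ← max_assoc, max_eq_left hcx, max_comm]
    rw [prevB, hout] at hdown
    exact (ReflTransGen.head ⟨.inl (.inr (.inl hup)), by simp⟩
      (hin.trans (reach_mul hc Q (B :: rest) hx hcK hK))).tail ⟨.inr hdown, by simp⟩

/-- `2 cos (π / 7)` is a root of `X³ - X² - 2X + 1`. -/
theorem two_cos_pi_div_seven_root :
    (2 * Real.cos (Real.pi / 7)) ^ 3 - (2 * Real.cos (Real.pi / 7)) ^ 2
      - 2 * (2 * Real.cos (Real.pi / 7)) + 1 = 0 := by
  set t := Real.pi / 7 with ht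
  have hpos : 0 < Real.cos t :=
    Real.cos_pos_of_mem_Ioo ⟨by linarith [Real.pi_pos], by linarith [Real.pi_pos]⟩
  have h43 : Real.cos (2 * (2 * t)) = -Real.cos (3 * t) := by
    rw [← Real.cos_pi_sub]
    congr 1
    rw [ht]
    ring
  rw [Real.cos_two_mul, Real.cos_two_mul, Real.cos_three_mul] at h43
  have hne : 2 * Real.cos t + 2 ≠ 0 := by linarith
  refine (mul_eq_zero.1 (?_ : (2 * Real.cos t + 2) * _ = 0)).resolve_left hne
  linear_combination 2 * h43

theorem cubic_neg (hc1 : 1 < c) (hc2 : c < 2 * Real.cos (Real.pi / 7)) :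
    c ^ 3 - c ^ 2 - 2 * c + 1 < 0 := by
  have hroot := two_cos_pi_div_seven_root
  set r := 2 * Real.cos (Real.pi / 7)
  have hr : 0 < r ^ 2 - 2 := by
    have h : 0 < (r - 1) * (r ^ 2 - 2) := by linarith
    exact pos_of_mul_pos_right h (by linarith)
  have hfactor : c ^ 3 - c ^ 2 - 2 * c + 1
      = -((r - c) * ((c - 1) * (c + r) + (r ^ 2 - 2))) := by
    linear_combination hroot
  rw [hfactor, neg_lt_zero]
  have h1 : 0 < r - c := by linarith
  have h2 : 0 < c - 1 := by linarith
  have h3 : 0 < c + r := by linarith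
  positivity

end AlternationTrading

open AlternationTrading in
/-- for every real `1 < c < 2cos(π/7)` there is a normal form
alternation-trading proof for `c` with at least two lines. -/
theorem statement2 (c : ℝ) (hc1 : 1 < c) (hc2 : c < 2 * Real.cos (Real.pi / 7)) :
    ∃ P : List Line, IsATProof c P ∧ IsNormalForm P ∧ 2 ≤ P.length := by
  have hcubic := cubic_neg hc1 hc2
  have hc3 : c < 2 := by linarith [Real.cos_le_one (Real.pi / 7)]
  obtain ⟨K, hlow, hK⟩ : ∃ K, max c (c ^ 2 - 1) < K ∧ K < c / (c - 1) := by
    refine exists_between (max_lt ?_ ?_) <;> rw [lt_div_iff₀ (by linarith)] <;> nlinarith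
  obtain ⟨hcK, hK1⟩ := max_lt_iff.1 hlow
  obtain ⟨n, hn⟩ := exists_ratio_le_one (by linarith) (by linarith) hK1
  obtain ⟨A, hA1, hA⟩ := reach_ratio hc1 hcK.le hK n
  have hr := ratio_pos (c := c) (K := K) (by linarith) (by linarith) n
  rw [ratio] at hn
  set r := ratio c K n
  have hK0 : 0 < K := by linarith
  obtain ⟨x, hx, hAx⟩ : ∃ x : ℝ, 1 ≤ x ∧ A ≤ K * x / r := by
    refine ⟨max 1 (A * r / K), le_max_left _ _, ?_⟩
    rw [le_div_iff₀ hr, ← div_le_iff₀' hK0]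
    exact le_max_right _ _
  have hrx : r * (K * x / r) = K * x := by field_simp
  have hin := hA _ hAx false ⟨true, x, x⟩ [] hx
  rw [hrx, max_eq_right (by nlinarith : c * x ≤ K * x)] at hin
  have hup := Speedup0.intro (K * x / r + x) x true (by linarith) (by linarith)
  rw [add_sub_cancel_right, max_eq_left hx, max_eq_left (by linarith : 1 ≤ K * x / r)] at hup
  have hdown := Slowdown.intro (c := c) true x x (c * x) []
  have hcx : x ≤ c * x := by nlinarith
  rw [prevB, max_eq_left hcx, max_eq_right hx, max_eq_left hcx] at hdown
  have hle : c * (c * x) ≤ K * x / r + x := by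
    rw [div_le_one (by linarith)] at hn
    rw [div_add' _ _ _ hr.ne', le_div_iff₀ hr]
    nlinarith
  exact exists_normalForm hc1 (by linarith) hle ⟨.inl (.inl hup), by simp⟩
    (hin.trans (reach_mul hc1 true [] hx hcK.le hK)) (.inr hdown)
end
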